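/- Let e ≥ 2, r = 4, with the matrices of the r = 4 family as defined below. Then, among the matrices α^1_f, α^2_g, α^3_h, β^{12}_{fg}, β^{13}_{fh}, β̄^{13}_{fh}, β^{23}_{gh}, γ^{123}_{fgh} (for 1 ≤ f ≤ y_1, 1 ≤ g ≤ y_2, 1 ≤ h ≤ y_3), exactly the following M satisfy that Pt(0,M) is Kleshchev: α^1_f with k_1 < i_f; α^2_g with i_1 < j_g and k_1 < j_g; α^3_h with i_1 < k_h; β^{12}_{fg} with k_1 < j_g < i_f, or with k_1 < j_g and i_f < j_g and f ≠ 1; β^{13}_{fh} with j_1 < i_f < k_h, or with k_h < i_f and h ≠ 1; β̄^{13}_{fh} with j_1 < k_h < i_f, or with i_f < k_h and f ≠ 1; β^{23}_{gh} with i_1 < j_g < k_h, or with i_1 < j_g and k_h < j_g and h ≠ 1; γ^{123}_{fgh} with (j_g < i_f and j_g < k_h and g ≠ 1), or (i_f < j_g < k_h and f ≠ 1), or (k_h < j_g < i_f and h ≠ 1), or (i_f < j_g and k_h < j_g and f ≠ 1 and h ≠ 1). -/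

import Mathlib

open scoped Classical

namespace AK
noncomputable section



/-! ### Matrices, order from base tuple, abacus β-sets -/

/-- The order ≺ on columns determined by a base tuple `B`. -/
def prec {e : ℕ} (B : Fin e → ℕ) (i j : Fin e) : Prop :=
  B i < B j ∨ (B i = B j ∧ i < j)

/-- `rank B i = π(B)⁻¹(i)`, the number of columns ≺-smaller than `i`. -/
def rank {e : ℕ} (B : Fin e → ℕ) (i : Fin e) : Fin e :=
  ⟨(Finset.univ.filter (fun j => prec B j i)).card, by
    have h1 : (Finset.univ.filter (fun j => prec B j i)) ⊆ Finset.univ.erase i := by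
      intro j hj
      rw [Finset.mem_filter] at hj
      refine Finset.mem_erase.mpr ⟨?_, Finset.mem_univ j⟩
      rintro rfl
      rcases hj.2 with h | ⟨-, h⟩ <;> exact lt_irrefl _ h
    have h2 := Finset.card_le_card h1
    have h3 : (Finset.univ.erase i).card < Finset.univ.card :=
      Finset.card_erase_lt_of_mem (Finset.mem_univ i)
    simpa using lt_of_le_of_lt h2 h3⟩

/-- The number of beads on runner `i` of the abacus of component `s` of `Pt(B,M)`. -/
def beads {e r : ℕ} (B : Fin e → ℕ) (M : Fin r → Fin e → Bool) (s : Fin r) (i : Fin e) : ℕ :=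
  B i + (if M s (rank B i) then 1 else 0)

/-- The canonical β-set of component `s` of `Pt(B,M)`. -/
def Tset {e r : ℕ} (B : Fin e → ℕ) (M : Fin r → Fin e → Bool) (s : Fin r) : Set ℤ :=
  {z | z < 0 ∨ (0 ≤ z ∧ ∃ h : z.toNat % e < e, z.toNat / e < beads B M s ⟨z.toNat % e, h⟩)}

/-- `n_s`, the total number of beads of component `s`. -/
def nsum {e r : ℕ} (B : Fin e → ℕ) (M : Fin r → Fin e → Bool) (s : Fin r) : ℕ :=
  ∑ i : Fin e, beads B M s i

/-- Decreasing enumeration of a set of integers: `tEnum T x` is `t_{x+1}`. -/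
noncomputable def tEnum (T : Set ℤ) : ℕ → ℤ
  | 0 => sSup T
  | (x + 1) => sSup (T ∩ Set.Iio (tEnum T x))

/-- The multipartition `Pt(B,M)`: component `s`, part `p+1` (0-indexed parts). -/
noncomputable def PtPart {e r : ℕ} (B : Fin e → ℕ) (M : Fin r → Fin e → Bool)
    (s : Fin r) (p : ℕ) : ℕ :=
  (tEnum (Tset B M s) p + (p + 1) - (nsum B M s : ℤ)).toNat

/-- The multicharge of `Pt(B,M)`. -/
noncomputable def PtCharge {e r : ℕ} (B : Fin e → ℕ) (M : Fin r → Fin e → Bool)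
    (s : Fin r) : ZMod e :=
  (nsum B M s : ZMod e)

/-! ### Nodes, good nodes and Kleshchev multipartitions -/

/-- A node `(s, x, y)` (all 0-indexed). -/
abbrev Node (r : ℕ) := Fin r × ℕ × ℕ

/-- `A` is above `B`. -/
def NodeAbove {r : ℕ} (A B : Node r) : Prop :=
  A.1 < B.1 ∨ (A.1 = B.1 ∧ A.2.1 < B.2.1)

/-- The residue of a node. -/
def res {e r : ℕ} (a : Fin r → ZMod e) (A : Node r) : ZMod e :=
  a A.1 - (A.2.1 : ZMod e) + (A.2.2 : ZMod e)

/-- `A` is a removable node of `lam`. -/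
def Removable {r : ℕ} (lam : Fin r → ℕ → ℕ) (A : Node r) : Prop :=
  A.2.2 + 1 = lam A.1 A.2.1 ∧ lam A.1 (A.2.1 + 1) < lam A.1 A.2.1

/-- `A` is an addable node of `lam`. -/
def Addable {r : ℕ} (lam : Fin r → ℕ → ℕ) (A : Node r) : Prop :=
  A.2.2 = lam A.1 A.2.1 ∧ (A.2.1 = 0 ∨ lam A.1 A.2.1 < lam A.1 (A.2.1 - 1))

/-- `A` is a normal node of `lam`. -/
def Normal {e r : ℕ} (a : Fin r → ZMod e) (lam : Fin r → ℕ → ℕ) (A : Node r) : Prop :=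
  Removable lam A ∧
    ∀ B : Node r, Addable lam B → res a B = res a A → NodeAbove A B →
      Set.ncard {C : Node r | Addable lam C ∧ res a C = res a A ∧ NodeAbove A C ∧ NodeAbove C B}
        < Set.ncard {C : Node r | Removable lam C ∧ res a C = res a A ∧ NodeAbove A C ∧ NodeAbove C B}

/-- `A` is a good node of `lam`: normal, and highest among normal nodes of its residue. -/
def Good {e r : ℕ} (a : Fin r → ZMod e) (lam : Fin r → ℕ → ℕ) (A : Node r) : Prop :=
  Normal a lam A ∧ ∀ B : Node r, Normal a lam B → res a B = res a A → B ≠ A → NodeAbove A B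

/-- Remove the node `A` from `lam`. -/
def removeNode {r : ℕ} (lam : Fin r → ℕ → ℕ) (A : Node r) : Fin r → ℕ → ℕ :=
  fun s x => if s = A.1 ∧ x = A.2.1 then lam s x - 1 else lam s x

/-- Kleshchev multipartitions (for the multicharge `a`). -/
inductive IsKleshchev {e r : ℕ} (a : Fin r → ZMod e) : (Fin r → ℕ → ℕ) → Prop
  | empty : IsKleshchev a (fun _ _ => 0)
  | step (lam : Fin r → ℕ → ℕ) (A : Node r) (hA : Good a lam A)
      (h : IsKleshchev a (removeNode lam A)) : IsKleshchev a lam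

/-! ### Weights and bead swaps -/

/-- `δ₊^M(t,s)`. -/
def deltaP {e r : ℕ} (M : Fin r → Fin e → Bool) (t s : Fin r) : ℕ :=
  (Finset.univ.filter (fun i => M t i = true ∧ M s i = false)).card

/-- `wt^M(t,s)`. -/
def wtPair {e r : ℕ} (M : Fin r → Fin e → Bool) (t s : Fin r) : ℕ :=
  min (deltaP M t s) (deltaP M s t)

/-- `wt(M)`. -/
def wtM {e r : ℕ} (M : Fin r → Fin e → Bool) : ℕ :=
  ∑ t : Fin r, ∑ s ∈ Finset.univ.filter (· < t), wtPair M t s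

/-- `M'` is obtained from `M` by a bead swap. -/
def BeadSwap {e r : ℕ} (M M' : Fin r → Fin e → Bool) : Prop :=
  ∃ i j : Fin e, i ≠ j ∧ ∃ s t : Fin r, s ≠ t ∧
    M s i = true ∧ M t j = true ∧ M s j = false ∧ M t i = false ∧
    M' s i = false ∧ M' t j = false ∧ M' s j = true ∧ M' t i = true ∧
    (∀ s' i', (s' ≠ s ∧ s' ≠ t) ∨ (i' ≠ i ∧ i' ≠ j) → M' s' i' = M s' i')


/-! ### The `r = 4` family -/

variable {e : ℕ}

/-- Default columns: `Y_0 ↦ I(0)`, `Y_1 ↦ I(1)`, `Y_2 ↦ I(2)`, `Y_3 ↦ I(3)`. -/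
def base4 (Y1 Y2 Y3 : Finset (Fin e)) : Fin 4 → Fin e → Bool :=
  fun s c =>
    if c ∈ Y1 then decide (s.1 < 1)
    else if c ∈ Y2 then decide (s.1 < 2)
    else if c ∈ Y3 then decide (s.1 < 3)
    else false

/-- Overwrite column `c0` by the vector `v`. -/
def over1 (c0 : Fin e) (v : Fin 4 → Bool) (Mb : Fin 4 → Fin e → Bool) :
    Fin 4 → Fin e → Bool :=
  fun s c => if c = c0 then v s else Mb s c

section r4defs

variable (Y1 Y2 Y3 : Finset (Fin e)) {y1 y2 y3 : ℕ}
variable (h1 : Y1.card = y1) (h2 : Y2.card = y2) (h3 : Y3.card = y3)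

/-- `α^1_f`. -/
def alpha1 (f : Fin y1) : Fin 4 → Fin e → Bool :=
  over1 (Y1.orderEmbOfFin h1 f) ![false, false, false, true] (base4 Y1 Y2 Y3)

/-- `α^2_g`. -/
def alpha2 (g : Fin y2) : Fin 4 → Fin e → Bool :=
  over1 (Y2.orderEmbOfFin h2 g) ![false, true, false, true] (base4 Y1 Y2 Y3)

/-- `α^3_h`. -/
def alpha3 (h : Fin y3) : Fin 4 → Fin e → Bool :=
  over1 (Y3.orderEmbOfFin h3 h) ![false, true, true, true] (base4 Y1 Y2 Y3)

/-- `β^{12}_{fg}`. -/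
def beta12 (f : Fin y1) (g : Fin y2) : Fin 4 → Fin e → Bool :=
  over1 (Y1.orderEmbOfFin h1 f) ![false, true, false, false]
    (over1 (Y2.orderEmbOfFin h2 g) ![true, false, false, true] (base4 Y1 Y2 Y3))

/-- `β^{13}_{fh}`. -/
def beta13 (f : Fin y1) (h : Fin y3) : Fin 4 → Fin e → Bool :=
  over1 (Y1.orderEmbOfFin h1 f) ![false, false, true, false]
    (over1 (Y3.orderEmbOfFin h3 h) ![true, true, false, true] (base4 Y1 Y2 Y3))

/-- `β̄^{13}_{fh}`. -/
def beta13bar (f : Fin y1) (h : Fin y3) : Fin 4 → Fin e → Bool :=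
  over1 (Y1.orderEmbOfFin h1 f) ![false, true, false, false]
    (over1 (Y3.orderEmbOfFin h3 h) ![true, false, true, true] (base4 Y1 Y2 Y3))

/-- `β^{23}_{gh}`. -/
def beta23 (g : Fin y2) (h : Fin y3) : Fin 4 → Fin e → Bool :=
  over1 (Y2.orderEmbOfFin h2 g) ![false, true, true, false]
    (over1 (Y3.orderEmbOfFin h3 h) ![true, true, false, true] (base4 Y1 Y2 Y3))

/-- `γ^{123}_{fgh}`. -/
def gamma123 (f : Fin y1) (g : Fin y2) (h : Fin y3) : Fin 4 → Fin e → Bool :=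
  over1 (Y1.orderEmbOfFin h1 f) ![false, true, false, false]
    (over1 (Y2.orderEmbOfFin h2 g) ![true, false, true, false]
      (over1 (Y3.orderEmbOfFin h3 h) ![true, true, false, true] (base4 Y1 Y2 Y3)))

end r4defs


/-! Partition-level theory -/

/-- Well-formedness: partitions in a box. -/
structure WF {r : ℕ} (e : ℕ) (n : Fin r → ℕ) (lam : Fin r → ℕ → ℕ) : Prop where
  anti : ∀ s p q, p ≤ q → lam s q ≤ lam s p
  top : ∀ s, lam s 0 + n s ≤ e
  bot : ∀ s, lam s (n s) = 0
  nanti : ∀ s t : Fin r, s ≤ t → n t ≤ n s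

/-- The semistandard condition. -/
def SS {r : ℕ} (n : Fin r → ℕ) (lam : Fin r → ℕ → ℕ) : Prop :=
  ∀ s t : Fin r, s.1 + 1 = t.1 → ∀ p, lam s (p + (n s - n t)) ≤ lam t p

/-- integer content -/
def cont {r : ℕ} (n : Fin r → ℕ) (A : Node r) : ℤ := (n A.1 : ℤ) - A.2.1 + A.2.2

/-- multicharge -/
def chg {r : ℕ} (e : ℕ) (n : Fin r → ℕ) : Fin r → ZMod e := fun s => (n s : ZMod e)

theorem res_eq {r e : ℕ} (n : Fin r → ℕ) (A : Node r) :
    res (chg e n) A = ((cont n A : ℤ) : ZMod e) := by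
  simp [res, chg, cont]

section
variable {r e : ℕ} {n : Fin r → ℕ} {lam : Fin r → ℕ → ℕ}

theorem rem_bd (w : WF e n lam) {A : Node r} (h : Removable lam A) :
    A.2.1 < n A.1 ∧ A.2.2 + n A.1 < e := by
  obtain ⟨s, x, y⟩ := A
  obtain ⟨h1, h2⟩ := h
  simp only at *
  have h3 := w.anti s 0 x (Nat.zero_le _)
  have h4 := w.top s
  refine ⟨?_, by omega⟩
  by_contra hc
  have h5 := w.anti s (n s) x (by omega)
  have h6 := w.bot s
  omega

theorem add_bd (w : WF e n lam) {A : Node r} (h : Addable lam A) :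
    A.2.1 ≤ n A.1 ∧ A.2.2 + n A.1 ≤ e := by
  obtain ⟨s, x, y⟩ := A
  obtain ⟨h1, h2⟩ := h
  simp only at *
  have h3 := w.anti s 0 x (Nat.zero_le _)
  have h4 := w.top s
  refine ⟨?_, by omega⟩
  by_contra hc
  have h5 := w.anti s (n s) (x - 1) (by omega)
  have h6 := w.bot s
  omega

theorem cont_rem (w : WF e n lam) {A : Node r} (h : Removable lam A) :
    1 ≤ cont n A ∧ cont n A < e := by
  have := rem_bd w h
  unfold cont
  omega

theorem cont_add (w : WF e n lam) {A : Node r} (h : Addable lam A) :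
    0 ≤ cont n A ∧ cont n A ≤ e := by
  have := add_bd w h
  unfold cont
  omega

theorem cont_eq_of (A B : Node r) (hA : 1 ≤ cont n A ∧ cont n A < e)
    (hB : 0 ≤ cont n B ∧ cont n B ≤ e) (h : res (chg e n) B = res (chg e n) A) :
    cont n B = cont n A := by
  rw [res_eq, res_eq, ZMod.intCast_eq_intCast_iff_dvd_sub] at h
  obtain ⟨k, hk⟩ := h
  have h1 : (e : ℤ) * k < e * 1 := by omega
  have h2 : (e : ℤ) * (-1) < e * k := by omega
  have he : (0 : ℤ) < e := by omega
  have h3 := lt_of_mul_lt_mul_left h1 he.le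
  have h4 := lt_of_mul_lt_mul_left h2 he.le
  have : k = 0 := by omega
  subst this
  omega

theorem add_eq (w : WF e n lam) {A B : Node r} (hA : Removable lam A) (hB : Addable lam B)
    (h : res (chg e n) B = res (chg e n) A) : cont n B = cont n A :=
  cont_eq_of A B (cont_rem w hA) (cont_add w hB) h

theorem rem_eq (w : WF e n lam) {A B : Node r} (hA : Removable lam A) (hB : Removable lam B)
    (h : res (chg e n) B = res (chg e n) A) : cont n B = cont n A :=
  cont_eq_of A B (cont_rem w hA) (by have := cont_rem w hB; omega) h

theorem fin_nodes (p : Node r → Prop) (hp : ∀ A, p A → A.2.1 ≤ e ∧ A.2.2 ≤ e) :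
    {A | p A}.Finite := by
  refine Set.Finite.subset
    (Set.finite_univ.prod ((Set.finite_Iic e).prod (Set.finite_Iic e))) (s := Set.univ ×ˢ _) ?_
  intro A hA
  have := hp A hA
  exact ⟨Set.mem_univ _, this.1, this.2⟩

/-- Same component: an addable and a removable node never share contents. -/
theorem same_comp (w : WF e n lam) {A B : Node r} (hA : Removable lam A) (hB : Addable lam B)
    (hs : A.1 = B.1) : cont n A ≠ cont n B := by
  obtain ⟨s, x, y⟩ := A
  obtain ⟨t, u, v⟩ := B
  simp only at hs
  subst hs
  obtain ⟨a1, a2⟩ := hA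
  obtain ⟨b1, b2⟩ := hB
  simp only [cont] at *
  rcases lt_or_ge x u with h | h
  · have := w.anti s (x+1) u h
    omega
  · have := w.anti s u x h
    omega

/-- Same component: removable nodes of the same content agree. -/
theorem same_comp_rem (w : WF e n lam) {A B : Node r} (hA : Removable lam A)
    (hB : Removable lam B) (hs : A.1 = B.1) (hc : cont n A = cont n B) : A = B := by
  obtain ⟨s, x, y⟩ := A
  obtain ⟨t, u, v⟩ := B
  simp only at hs
  subst hs
  obtain ⟨a1, a2⟩ := hA
  obtain ⟨b1, b2⟩ := hB
  simp only [cont] at *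
  have : x = u := by
    rcases lt_trichotomy x u with h | h | h
    · have := w.anti s (x+1) u h
      omega
    · exact h
    · have := w.anti s (u+1) x h
      omega
  subst this
  have : y = v := by omega
  subst this
  rfl

theorem WF.remove (w : WF e n lam) {A : Node r} (hA : Removable lam A) :
    WF e n (removeNode lam A) := by
  obtain ⟨s, x, y⟩ := A
  obtain ⟨a1, a2⟩ := hA
  simp only at a1 a2
  refine ⟨?_, ?_, ?_, w.nanti⟩
  · intro t p q hpq
    have h1 := w.anti t p q hpq
    simp only [removeNode]
    by_cases h : t = s
    · subst h
      rcases Nat.lt_or_ge x q with hq | hq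
      · have := w.anti t (x+1) q hq
        split_ifs with h1 h2 h2 <;> first | omega | (simp only [true_and] at *; subst h2; omega)
      · split_ifs with h1 h2 h2 <;> simp only [true_and] at * <;> omega
    · simp [h, h1]
  · intro t
    have := w.top t
    simp only [removeNode]
    split_ifs <;> omega
  · intro t
    have := w.bot t
    simp only [removeNode]
    split_ifs <;> omega

theorem SS.remove (w : WF e n lam) {A : Node r} (hG : Good (chg e n) lam A) (hP : SS n lam) :
    SS n (removeNode lam A) := by
  intro s' s hs p
  have hp := hP s' s hs p
  obtain ⟨⟨hR, hN⟩, hmax⟩ := hG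
  obtain ⟨s0, x, y⟩ := A
  have hR' := hR
  obtain ⟨a1, a2⟩ := hR'
  simp only [removeNode] at *
  by_cases hc : s = s0 ∧ p = x
  swap
  · rw [if_neg hc]
    split_ifs <;> omega
  rw [if_pos hc]
  obtain ⟨rfl, rfl⟩ := hc
  have hne : s' ≠ s := by rintro rfl; omega
  rw [if_neg (by simp [hne])]
  by_contra hlt
  have hnn := w.nanti s' s (by rw [Fin.le_def]; omega)
  have e1 : lam s' (p + (n s' - n s)) = y + 1 := by omega
  have hp1 := hP s' s hs (p + 1)
  have hR2 : Removable lam (s', p + (n s' - n s), y) := by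
    refine ⟨e1.symm, ?_⟩
    have : p + (n s' - n s) + 1 = p + 1 + (n s' - n s) := by omega
    simp only [this]
    omega
  have hcont : cont n (s', p + (n s' - n s), y) = cont n (s, p, y) := by
    simp only [cont]; omega
  have hres : res (chg e n) (s', p + (n s' - n s), y) = res (chg e n) (s, p, y) := by
    rw [res_eq, res_eq, hcont]
  have key : ∀ B : Node r, Addable lam B → res (chg e n) B = res (chg e n) (s, p, y) →
      NodeAbove (s', p + (n s' - n s), y) B → NodeAbove (s, p, y) B := by
    intro B hB hr hab
    have hcB := add_eq w hR hB hr
    have n1 : B.1 ≠ s := fun h => same_comp w hR hB h.symm hcB.symm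
    have n2 : B.1 ≠ s' := fun h => same_comp w hR2 hB h.symm (by rw [hcont, hcB])
    left
    simp only
    rcases hab with h | h
    · simp only [Fin.lt_def] at h ⊢
      have : B.1.1 ≠ s.1 := fun h => n1 (Fin.ext h)
      omega
    · exact absurd h.1.symm n2
  have hab0 : NodeAbove (s', p + (n s' - n s), y) (s, p, y) := by
    left; simp only [Fin.lt_def]; omega
  have trans0 : ∀ C : Node r, NodeAbove (s, p, y) C → NodeAbove (s', p + (n s' - n s), y) C := by
    intro C h
    left
    rcases h with h | h
    · simp only [Fin.lt_def] at h ⊢; omega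
    · rw [← h.1]; simp only [Fin.lt_def]; omega
  have hNorm : Normal (chg e n) lam (s', p + (n s' - n s), y) := by
    refine ⟨hR2, fun B hB hr hab => ?_⟩
    rw [hres] at hr ⊢
    refine lt_of_le_of_lt ?_ (lt_of_lt_of_le (hN B hB hr (key B hB hr hab)) ?_)
    · refine Set.ncard_le_ncard ?_ (fin_nodes (e := e) _ ?_)
      · rintro C ⟨c1, c2, c3, c4⟩
        exact ⟨c1, c2, key C c1 c2 c3, c4⟩
      · rintro C ⟨c1, -⟩
        have := add_bd w c1
        have := w.top C.1
        omega
    · refine Set.ncard_le_ncard ?_ (fin_nodes (e := e) _ ?_)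
      · rintro C ⟨c1, c2, c3, c4⟩
        exact ⟨c1, c2, trans0 C c3, c4⟩
      · rintro C ⟨c1, -⟩
        have := rem_bd w c1
        have := w.top C.1
        omega
  have := hmax _ hNorm hres (by intro h; exact hne (congrArg Prod.fst h))
  rcases this with h | h
  · simp only [Fin.lt_def] at h; omega
  · exact hne h.1.symm

theorem SS.unremove (w : WF e n lam) {A : Node r} (hG : Good (chg e n) lam A)
    (hP : SS n (removeNode lam A)) : SS n lam := by
  intro s t hst p
  have hp := hP s t hst p
  obtain ⟨⟨hR, hN⟩, -⟩ := hG
  obtain ⟨s0, x, y⟩ := A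
  have hR' := hR
  obtain ⟨a1, a2⟩ := hR'
  simp only [removeNode] at *
  have hne : s ≠ t := by rintro rfl; omega
  by_cases hc : s = s0 ∧ p + (n s - n t) = x
  swap
  · rw [if_neg hc] at hp
    split_ifs at hp <;> omega
  rw [if_pos hc] at hp
  obtain ⟨rfl, hx⟩ := hc
  rw [if_neg (by simp [hne.symm])] at hp
  by_contra hlt
  rw [hx] at hp hlt
  have hnn := w.nanti s t (by rw [Fin.le_def]; omega)
  have e1 : lam t p = y := by omega
  have hB : Addable lam (t, p, y) := by
    refine ⟨e1.symm, ?_⟩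
    simp only
    rcases Nat.eq_zero_or_pos p with h | h
    · exact Or.inl h
    right
    have h1 := hP s t hst (p - 1)
    simp only [removeNode] at h1
    rw [if_neg (by omega), if_neg (by simp [hne.symm])] at h1
    have := w.anti s (p - 1 + (n s - n t)) x (by omega)
    omega
  have hcont : cont n (t, p, y) = cont n (s, x, y) := by
    simp only [cont]; omega
  have hres : res (chg e n) (t, p, y) = res (chg e n) (s, x, y) := by
    rw [res_eq, res_eq, hcont]
  have h := hN _ hB hres (by left; simp only [Fin.lt_def]; omega)
  have hemp : {C : Node r | Removable lam C ∧ res (chg e n) C = res (chg e n) (s, x, y) ∧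
      NodeAbove (s, x, y) C ∧ NodeAbove C (t, p, y)} = ∅ := by
    rw [Set.eq_empty_iff_forall_notMem]
    rintro C ⟨c1, c2, c3, c4⟩
    have hcC := rem_eq w hR c1 c2
    have n1 : C.1 ≠ t := fun h => same_comp w c1 hB h (by rw [hcC, hcont])
    have n2 : C.1 ≠ s := by
      intro h
      have := same_comp_rem w c1 hR h hcC
      subst this
      rcases c3 with h | h
      · exact lt_irrefl _ h
      · exact lt_irrefl _ h.2
    have n1' : C.1.1 ≠ t.1 := fun h => n1 (Fin.ext h)
    have n2' : C.1.1 ≠ s.1 := fun h => n2 (Fin.ext h)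
    rcases c3 with h | h
    · rcases c4 with h' | h'
      · simp only [Fin.lt_def] at h h'; omega
      · exact n1 h'.1
    · exact n2 h.1.symm
  rw [hemp, Set.ncard_empty] at h
  omega

theorem exists_good (w : WF e n lam) (hP : SS n lam) (hz : lam ≠ fun _ _ => 0) :
    ∃ A, Good (chg e n) lam A := by
  -- the lowest nonempty component
  have hex : ∃ s, lam s 0 ≠ 0 := by
    by_contra hc
    push Not at hc
    apply hz
    funext s x
    have := w.anti s 0 x (Nat.zero_le _)
    have := hc s
    omega
  obtain ⟨s, hs, hsmax⟩ := Finset.exists_max_image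
    (Finset.univ.filter (fun s : Fin r => lam s 0 ≠ 0)) (fun s => s.1)
    (by obtain ⟨s, hs⟩ := hex; exact ⟨s, by simpa using hs⟩)
  simp only [Finset.mem_filter, Finset.mem_univ, true_and] at hs hsmax
  have hex2 : ∃ x, lam s x = 0 := ⟨_, w.bot s⟩
  obtain ⟨x, hx⟩ : ∃ x, Nat.find hex2 = x + 1 := by
    refine ⟨Nat.find hex2 - 1, ?_⟩
    have : Nat.find hex2 ≠ 0 := by
      intro h
      have := Nat.find_spec hex2
      rw [h] at this
      exact hs this
    omega
  have hx1 : lam s (x + 1) = 0 := by rw [← hx]; exact Nat.find_spec hex2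
  have hx2 : lam s x ≠ 0 := Nat.find_min hex2 (by omega)
  have hR : Removable lam (s, x, lam s x - 1) := by
    constructor <;> simp only <;> omega
  have hnorm : Normal (chg e n) lam (s, x, lam s x - 1) := by
    refine ⟨hR, fun B hB hr hab => ?_⟩
    exfalso
    have hcB := add_eq w hR hB hr
    have n1 : B.1 ≠ s := fun h => same_comp w hR hB h.symm hcB.symm
    rcases hab with h | h
    swap
    · exact n1 h.1.symm
    obtain ⟨t, u, v⟩ := B
    simp only [Fin.lt_def] at h
    have ht : lam t 0 = 0 := by
      by_contra hc
      have := hsmax t hc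
      omega
    have htall : ∀ q, lam t q = 0 := fun q => by
      have := w.anti t 0 q (Nat.zero_le _)
      omega
    obtain ⟨b1, b2⟩ := hB
    simp only [htall] at b1 b2
    have hu : u = 0 := by omega
    have hlt := t.2
    have hp := hP s ⟨s.1 + 1, by omega⟩ rfl 0
    have h0 : lam ⟨s.1 + 1, by omega⟩ 0 = 0 := by
      by_contra hc
      have := hsmax _ hc
      simp at this
    rw [h0] at hp
    have hnn := w.nanti ⟨s.1 + 1, by omega⟩ t (by rw [Fin.le_def]; simp only; omega)
    simp only [cont] at hcB
    have hxx : x < 0 + (n s - n ⟨s.1 + 1, by omega⟩) := by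
      by_contra hc
      have := w.anti s _ x (not_lt.mp hc)
      omega
    omega
  obtain ⟨A, hA, hAmin⟩ := Set.exists_min_image
    {A : Node r | Normal (chg e n) lam A ∧
      res (chg e n) A = res (chg e n) (s, x, lam s x - 1)}
    (fun A => A.1.1)
    (fin_nodes (e := e) _ (by
      rintro C ⟨c1, -⟩
      have := rem_bd w c1.1
      have := w.top C.1
      omega)) ⟨_, hnorm, rfl⟩
  refine ⟨A, hA.1, fun B hB hr hne => ?_⟩
  have hle := hAmin B ⟨hB, hr.trans hA.2⟩
  left
  rw [Fin.lt_def]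
  rcases lt_or_eq_of_le hle with h | h
  · exact h
  · exact absurd (same_comp_rem w hB.1 hA.1.1 (Fin.ext h.symm) (rem_eq w hA.1.1 hB.1 hr)) hne

theorem kleshchev_SS (lam : Fin r → ℕ → ℕ) (hk : IsKleshchev (chg e n) lam) :
    WF e n lam → SS n lam := by
  induction hk with
  | empty => intro _ s t _ p; exact le_rfl
  | step lam A hA _ ih => intro w; exact SS.unremove w hA (ih (w.remove hA.1.1))

theorem SS_kleshchev (N : ℕ) : ∀ (lam : Fin r → ℕ → ℕ), WF e n lam → SS n lam →
    ∑ s, ∑ x ∈ Finset.range e, lam s x ≤ N → IsKleshchev (chg e n) lam := by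
  induction N with
  | zero =>
    intro lam w hP hN
    by_cases hz : lam = fun _ _ => 0
    · rw [hz]; exact IsKleshchev.empty
    exfalso
    obtain ⟨A, hA⟩ := exists_good w hP hz
    have hR := hA.1.1
    have hb := rem_bd w hR
    have ht := w.top A.1
    have : lam A.1 A.2.1 = 0 := by
      have h0 := Nat.le_zero.mp hN
      rw [Finset.sum_eq_zero_iff] at h0
      have h1 := h0 A.1 (Finset.mem_univ _)
      rw [Finset.sum_eq_zero_iff] at h1
      exact h1 A.2.1 (Finset.mem_range.mpr (by omega))
    have := hR.1
    omega
  | succ N ih =>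
    intro lam w hP hN
    by_cases hz : lam = fun _ _ => 0
    · rw [hz]; exact IsKleshchev.empty
    obtain ⟨A, hA⟩ := exists_good w hP hz
    have hR := hA.1.1
    have hb := rem_bd w hR
    have ht := w.top A.1
    refine IsKleshchev.step lam A hA (ih _ (w.remove hR) (hP.remove w hA) ?_)
    refine Nat.lt_succ_iff.mp (lt_of_lt_of_le ?_ hN)
    have hle : ∀ s x, removeNode lam A s x ≤ lam s x := by
      intro s x; simp only [removeNode]; split_ifs <;> omega
    refine Finset.sum_lt_sum (fun s _ => Finset.sum_le_sum fun x _ => hle s x)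
      ⟨A.1, Finset.mem_univ _, Finset.sum_lt_sum (fun x _ => hle _ x)
        ⟨A.2.1, Finset.mem_range.mpr (by omega), ?_⟩⟩
    simp only [removeNode, and_self, if_true]
    have := hR.1
    omega

theorem kleshchev_iff (w : WF e n lam) : IsKleshchev (chg e n) lam ↔ SS n lam :=
  ⟨fun h => kleshchev_SS lam h w, fun h => SS_kleshchev _ lam w h le_rfl⟩

end

/-! From matrices to partitions -/

/-- number of ones before column `c` -/
def cntB {e : ℕ} (m : Fin e → Bool) (c : ℕ) : ℕ :=
  (Finset.univ.filter (fun i : Fin e => m i = true ∧ i.1 < c)).card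

/-- the β-set -/
def TT {e : ℕ} (m : Fin e → Bool) : Set ℤ :=
  {z : ℤ | z < 0 ∨ ∃ i : Fin e, m i = true ∧ z = i.1}

/-- normalized count of beads below `z` -/
def NZ {e : ℕ} (m : Fin e → Bool) (z : ℤ) : ℤ :=
  if z ≤ 0 then z else cntB m z.toNat

theorem cntB_zero {e : ℕ} (m : Fin e → Bool) : cntB m 0 = 0 := by
  simp [cntB]

theorem cntB_succ {e : ℕ} (m : Fin e → Bool) (c : ℕ) :
    cntB m (c + 1) = cntB m c + if ∃ i : Fin e, m i = true ∧ i.1 = c then 1 else 0 := by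
  unfold cntB
  split_ifs with h
  · obtain ⟨i, hi, rfl⟩ := h
    have : (Finset.univ.filter (fun j : Fin e => m j = true ∧ j.1 < i.1 + 1)) =
        insert i (Finset.univ.filter (fun j : Fin e => m j = true ∧ j.1 < i.1)) := by
      ext j
      simp only [Finset.mem_filter, Finset.mem_univ, true_and, Finset.mem_insert]
      constructor
      · rintro ⟨h1, h2⟩
        rcases Nat.lt_or_ge j.1 i.1 with h | h
        · exact Or.inr ⟨h1, h⟩
        · exact Or.inl (Fin.ext (by omega))
      · rintro (rfl | ⟨h1, h2⟩)
        · exact ⟨hi, by omega⟩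
        · exact ⟨h1, by omega⟩
    rw [this, Finset.card_insert_of_notMem (by simp)]
  · rw [add_zero]
    congr 1
    ext j
    simp only [Finset.mem_filter, Finset.mem_univ, true_and]
    constructor
    · rintro ⟨h1, h2⟩
      refine ⟨h1, ?_⟩
      have : j.1 ≠ c := fun hc => h ⟨j, h1, hc⟩
      omega
    · rintro ⟨h1, h2⟩
      exact ⟨h1, by omega⟩

theorem cntB_top {e : ℕ} (m : Fin e → Bool) (c : ℕ) (hc : e ≤ c) : cntB m c = cntB m e := by
  unfold cntB
  congr 1
  ext j
  have := j.2
  simp only [Finset.mem_filter, Finset.mem_univ, true_and]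
  constructor
  · rintro ⟨h1, h2⟩
    exact ⟨h1, by omega⟩
  · rintro ⟨h1, h2⟩
    exact ⟨h1, by omega⟩

theorem cntB_le {e : ℕ} (m : Fin e → Bool) (c : ℕ) : cntB m c ≤ cntB m e := by
  rcases le_total e c with h | h
  · exact (cntB_top m c h).le
  · apply Finset.card_le_card
    intro j
    simp only [Finset.mem_filter, Finset.mem_univ, true_and]
    rintro ⟨h1, h2⟩
    exact ⟨h1, by omega⟩

section
variable {e : ℕ} (m : Fin e → Bool)

theorem NZ_nat (c : ℕ) : NZ m c = cntB m c := by
  unfold NZ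
  split_ifs with h
  · have : c = 0 := by omega
    subst this
    simp [cntB_zero]
  · simp

theorem NZ_succ (z : ℤ) : NZ m (z + 1) = NZ m z + if z ∈ TT m then 1 else 0 := by
  rcases lt_or_ge z 0 with h | h
  · have h1 : z ∈ TT m := Or.inl h
    rw [if_pos h1]
    unfold NZ
    rw [if_pos (by omega), if_pos (by omega)]
  · lift z to ℕ using h
    have : ((z : ℤ) + 1) = ((z + 1 : ℕ) : ℤ) := by push_cast; rfl
    rw [this, NZ_nat, NZ_nat, cntB_succ]
    have h2 : ((z : ℤ) ∈ TT m) ↔ ∃ i : Fin e, m i = true ∧ i.1 = z := by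
      constructor
      · rintro (h | ⟨i, h1, h2⟩)
        · omega
        · exact ⟨i, h1, by omega⟩
      · rintro ⟨i, h1, h2⟩
        exact Or.inr ⟨i, h1, by omega⟩
    simp only [h2]
    push_cast
    rfl

theorem NZ_mono : Monotone (NZ m) := by
  apply monotone_int_of_le_succ
  intro z
  rw [NZ_succ]
  split_ifs <;> omega

theorem NZ_le (z : ℤ) : NZ m z ≤ z := by
  rcases le_total z 0 with h | h
  · unfold NZ; rw [if_pos h]
  · refine Int.leInduction (m := 0) (motive := fun z _ => NZ m z ≤ z) ?_ ?_ z h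
    · simp [NZ]
    · intro k _ ih
      rw [NZ_succ]
      split_ifs <;> omega

theorem NZ_const (u v : ℤ) (huv : u ≤ v) (h : ∀ z, u ≤ z → z < v → z ∉ TT m) :
    NZ m v = NZ m u := by
  refine Int.leInduction (m := u) (motive := fun v _ => (∀ z, u ≤ z → z < v → z ∉ TT m) →
    NZ m v = NZ m u) ?_ ?_ v huv h
  · intro _; rfl
  · intro k hk ih h
    rw [NZ_succ, if_neg (h k hk (by omega)), ih (fun z h1 h2 => h z h1 (by omega)), add_zero]

theorem TT_lt {z : ℤ} (h : z ∈ TT m) : z < e := by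
  rcases h with h | ⟨i, -, h⟩
  · omega
  · have := i.2; omega

theorem sSup_spec (T : Set ℤ) (hne : T.Nonempty) (b : ℤ) (hb : ∀ z ∈ T, z ≤ b) :
    sSup T ∈ T ∧ ∀ z ∈ T, z ≤ sSup T :=
  ⟨Int.csSup_mem hne ⟨b, hb⟩, fun _ hz => le_csSup ⟨b, hb⟩ hz⟩

theorem NZ_e : NZ m e = cntB m e := NZ_nat m e

theorem tEnum_spec (p : ℕ) :
    tEnum (TT m) p ∈ TT m ∧ NZ m (tEnum (TT m) p + 1) = (cntB m e : ℤ) - p := by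
  induction p with
  | zero =>
    obtain ⟨h1, h2⟩ := sSup_spec (TT m) ⟨-1, Or.inl (by omega)⟩ e (fun z hz => (TT_lt m hz).le)
    refine ⟨h1, ?_⟩
    have h3 := TT_lt m h1
    rw [← NZ_e, tEnum]
    rw [NZ_const m (sSup (TT m) + 1) e (by omega)]
    · simp
    · intro z hz _ hzT
      have := h2 z hzT
      omega
  | succ p ih =>
    obtain ⟨i1, i2⟩ := ih
    obtain ⟨h1, h2⟩ := sSup_spec (TT m ∩ Set.Iio (tEnum (TT m) p))
      ⟨min (-1) (tEnum (TT m) p - 1), Or.inl (by omega), by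
        simp only [Set.mem_Iio]; omega⟩ e (fun z hz => (TT_lt m hz.1).le)
    rw [tEnum]
    refine ⟨h1.1, ?_⟩
    have h3 : sSup (TT m ∩ Set.Iio (tEnum (TT m) p)) < tEnum (TT m) p := h1.2
    rw [NZ_succ, if_pos i1] at i2
    rw [← NZ_const m (sSup (TT m ∩ Set.Iio (tEnum (TT m) p)) + 1) (tEnum (TT m) p) (by omega)]
    · push_cast
      omega
    · intro z hz hz2 hzT
      have := h2 z ⟨hzT, hz2⟩
      omega

theorem tEnum_lt_iff (p : ℕ) (z : ℤ) :
    tEnum (TT m) p < z ↔ (cntB m e : ℤ) ≤ p + NZ m z := by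
  obtain ⟨h1, h2⟩ := tEnum_spec m p
  constructor
  · intro h
    have := NZ_mono m (show tEnum (TT m) p + 1 ≤ z by omega)
    omega
  · intro h
    by_contra hc
    have := NZ_mono m (show z ≤ tEnum (TT m) p by omega)
    rw [NZ_succ, if_pos h1] at h2
    omega

/-- The parts of the partition, as integers. -/
def partZ (p : ℕ) : ℤ := tEnum (TT m) p + (p + 1) - (cntB m e : ℤ)

theorem partZ_nonneg (p : ℕ) : 0 ≤ partZ m p := by
  obtain ⟨h1, h2⟩ := tEnum_spec m p
  have := NZ_le m (tEnum (TT m) p + 1)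
  unfold partZ
  omega

theorem partZ_succ (p : ℕ) : partZ m (p + 1) ≤ partZ m p := by
  have h : tEnum (TT m) (p + 1) < tEnum (TT m) p := by
    rw [tEnum_lt_iff]
    obtain ⟨h1, h2⟩ := tEnum_spec m p
    rw [NZ_succ, if_pos h1] at h2
    push_cast
    omega
  unfold partZ
  push_cast
  omega

theorem partZ_zero : partZ m 0 + cntB m e ≤ e := by
  have := TT_lt m (tEnum_spec m 0).1
  unfold partZ
  push_cast
  omega

theorem partZ_n : partZ m (cntB m e) ≤ 0 := by
  have : tEnum (TT m) (cntB m e) < 0 := by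
    rw [tEnum_lt_iff]
    simp [NZ]
  unfold partZ
  omega

end

theorem rank_zero {e : ℕ} (i : Fin e) : rank (fun _ => 0) i = i := by
  apply Fin.ext
  have : (Finset.univ.filter (fun j => prec (fun _ => 0) j i)) = Finset.Iio i := by
    ext j
    simp [prec]
  simp only [rank, this, Fin.card_Iio]

theorem Tset_eq {e r : ℕ} (M : Fin r → Fin e → Bool) (s : Fin r) :
    Tset (fun _ => 0) M s = TT (M s) := by
  have hrank := fun i : Fin e => rank_zero i
  ext z
  simp only [Tset, TT, Set.mem_ofPred_eq, beads, hrank, zero_add]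
  constructor
  · rintro (h | ⟨h0, hlt, h⟩)
    · exact Or.inl h
    · right
      have he : 0 < e := by omega
      refine ⟨⟨z.toNat % e, hlt⟩, ?_⟩
      split_ifs at h with hM
      · refine ⟨hM, ?_⟩
        have : z.toNat < e := by
          by_contra hc
          have := Nat.div_pos (not_lt.mp hc) he
          omega
        simp only [Nat.mod_eq_of_lt this]
        omega
      · exact absurd h (Nat.not_lt_zero _)
  · rintro (h | ⟨i, hi, rfl⟩)
    · exact Or.inl h
    · right
      have h1 : (i.1 : ℤ).toNat % e = i.1 := by simp [Nat.mod_eq_of_lt i.2]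
      refine ⟨by omega, by rw [h1]; exact i.2, ?_⟩
      have h2 : (⟨(i.1 : ℤ).toNat % e, by rw [h1]; exact i.2⟩ : Fin e) = i := Fin.ext h1
      simp [hi, Nat.div_eq_of_lt i.2, Nat.mod_eq_of_lt i.2]

theorem nsum_eq {e r : ℕ} (M : Fin r → Fin e → Bool) (s : Fin r) :
    nsum (fun _ => 0) M s = cntB (M s) e := by
  have hrank := fun i : Fin e => rank_zero i
  simp [nsum, beads, hrank, cntB]

theorem PtPart_eq {e r : ℕ} (M : Fin r → Fin e → Bool) (s : Fin r) (p : ℕ) :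
    PtPart (fun _ => 0) M s p = (partZ (M s) p).toNat := by
  rw [PtPart, Tset_eq, nsum_eq, partZ]

theorem Pt_iff {e r : ℕ} (M : Fin r → Fin e → Bool)
    (hn : ∀ s t : Fin r, s ≤ t → cntB (M t) e ≤ cntB (M s) e) :
    IsKleshchev (PtCharge (fun _ => 0) M) (PtPart (fun _ => 0) M) ↔
      ∀ s t : Fin r, s.1 + 1 = t.1 → ∀ c, cntB (M t) c ≤ cntB (M s) c := by
  have hch : PtCharge (fun _ => 0) M = chg e (fun s => cntB (M s) e) := by
    funext s
    simp [PtCharge, chg, nsum_eq]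
  have w : WF e (fun s => cntB (M s) e) (PtPart (fun _ => 0) M) := by
    refine ⟨?_, ?_, ?_, hn⟩
    · intro s p q hpq
      refine antitone_nat_of_succ_le (f := PtPart (fun _ => 0) M s) ?_ hpq
      intro k
      rw [PtPart_eq, PtPart_eq]
      exact Int.toNat_le_toNat (partZ_succ _ _)
    · intro s
      rw [PtPart_eq]
      have := partZ_zero (M s)
      have := partZ_nonneg (M s) 0
      omega
    · intro s
      rw [PtPart_eq]
      have := partZ_n (M s)
      omega
  rw [hch, kleshchev_iff w]
  unfold SS
  refine forall_congr' fun s => forall_congr' fun t => forall_congr' fun hst => ?_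
  have hle := hn s t (by rw [Fin.le_def]; omega)
  have e1 : ∀ p, PtPart (fun _ => 0) M s (p + (cntB (M s) e - cntB (M t) e)) ≤
      PtPart (fun _ => 0) M t p ↔
      ∀ z : ℤ, (cntB (M t) e : ℤ) ≤ p + NZ (M t) z → (cntB (M t) e : ℤ) ≤ p + NZ (M s) z := by
    intro p
    have h0 : PtPart (fun _ => 0) M s (p + (cntB (M s) e - cntB (M t) e)) ≤
      PtPart (fun _ => 0) M t p ↔ 
      tEnum (TT (M s)) (p + (cntB (M s) e - cntB (M t) e)) ≤ tEnum (TT (M t)) p := by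
      rw [PtPart_eq, PtPart_eq]
      have a1 := partZ_nonneg (M s) (p + (cntB (M s) e - cntB (M t) e))
      have a2 := partZ_nonneg (M t) p
      have a3 : ∀ a b : ℤ, 0 ≤ a → 0 ≤ b → (a.toNat ≤ b.toNat ↔ a ≤ b) := by
        intro a b ha hb; omega
      rw [a3 _ _ a1 a2]
      unfold partZ
      push_cast [hle]
      omega
    rw [h0]
    constructor
    · intro h z hz
      rw [← tEnum_lt_iff] at hz
      have := lt_of_le_of_lt h hz
      rw [tEnum_lt_iff] at this
      push_cast [hle] at this
      omega
    · intro h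
      have := h (tEnum (TT (M t)) p + 1) (by rw [← tEnum_lt_iff]; omega)
      apply Int.lt_add_one_iff.mp
      rw [tEnum_lt_iff]
      push_cast [hle]
      omega
  simp only [e1]
  constructor
  · intro h c
    have h1 := cntB_le (M t) c
    have := h (cntB (M t) e - cntB (M t) c) c
    rw [NZ_nat, NZ_nat] at this
    push_cast [h1] at this
    omega
  · intro h p z hz
    refine hz.trans ?_
    unfold NZ
    split_ifs
    · exact le_rfl
    · have := h z.toNat
      omega

/-! Counting in the `r = 4` family -/

/-- indicator of `x < c` -/
def ind {e : ℕ} (x : Fin e) (c : ℕ) : ℕ := if x.1 < c then 1 else 0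

/-- number of elements of `Y` below `c` -/
def cY {e : ℕ} (Y : Finset (Fin e)) (c : ℕ) : ℕ := (Y.filter (fun i => i.1 < c)).card

theorem Pt_iff4 {e : ℕ} (M : Fin 4 → Fin e → Bool)
    (hn : cntB (M 1) e ≤ cntB (M 0) e ∧ cntB (M 2) e ≤ cntB (M 1) e ∧
      cntB (M 3) e ≤ cntB (M 2) e) :
    IsKleshchev (PtCharge (fun _ => 0) M) (PtPart (fun _ => 0) M) ↔
      ∀ c, cntB (M 1) c ≤ cntB (M 0) c ∧ cntB (M 2) c ≤ cntB (M 1) c ∧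
        cntB (M 3) c ≤ cntB (M 2) c := by
  obtain ⟨n1, n2, n3⟩ := hn
  rw [Pt_iff]
  · constructor
    · intro h c
      exact ⟨h 0 1 rfl c, h 1 2 rfl c, h 2 3 rfl c⟩
    · intro h s t hst c
      obtain ⟨a1, a2, a3⟩ := h c
      fin_cases s <;> fin_cases t <;> first | (exfalso; revert hst; decide) | assumption
  · have : Antitone (fun s : Fin 4 => cntB (M s) e) := by
      rw [Fin.antitone_iff_succ_le]
      intro i
      fin_cases i <;> assumption
    exact fun s t hst => this hst

theorem cntB_sum {e : ℕ} (m : Fin e → Bool) (c : ℕ) :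
    cntB m c = ∑ i, if m i = true then ind i c else 0 := by
  unfold cntB ind
  rw [Finset.card_filter]
  refine Finset.sum_congr rfl fun i _ => ?_
  by_cases h : m i = true <;> simp [h]

theorem cY_sum {e : ℕ} (Y : Finset (Fin e)) (c : ℕ) :
    cY Y c = ∑ i, if i ∈ Y then ind i c else 0 := by
  unfold cY ind
  rw [Finset.card_filter, Finset.sum_ite_mem, Finset.univ_inter]

theorem cntB_over {e : ℕ} (c0 : Fin e) (v : Fin 4 → Bool) (Mb : Fin 4 → Fin e → Bool)
    (s : Fin 4) (c : ℕ) :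
    cntB (over1 c0 v Mb s) c + (if Mb s c0 = true then ind c0 c else 0) =
      cntB (Mb s) c + (if v s = true then ind c0 c else 0) := by
  rw [cntB_sum, cntB_sum, ← Finset.sum_erase_add _ _ (Finset.mem_univ c0),
    ← Finset.sum_erase_add (a := c0) _ (fun i => if Mb s i = true then ind i c else 0)
      (Finset.mem_univ c0)]
  have : ∑ x ∈ Finset.univ.erase c0, (if over1 c0 v Mb s x = true then ind x c else 0) =
      ∑ x ∈ Finset.univ.erase c0, (if Mb s x = true then ind x c else 0) := by
    refine Finset.sum_congr rfl fun i hi => ?_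
    have := Finset.ne_of_mem_erase hi
    simp [over1, this]
  rw [this]
  simp only [over1, if_true]
  omega

theorem cntB_base {e : ℕ} (Y1 Y2 Y3 : Finset (Fin e))
    (h12 : Disjoint Y1 Y2) (h13 : Disjoint Y1 Y3) (h23 : Disjoint Y2 Y3) (c : ℕ) :
    cntB (base4 Y1 Y2 Y3 0) c = cY Y1 c + cY Y2 c + cY Y3 c ∧
    cntB (base4 Y1 Y2 Y3 1) c = cY Y2 c + cY Y3 c ∧
    cntB (base4 Y1 Y2 Y3 2) c = cY Y3 c ∧
    cntB (base4 Y1 Y2 Y3 3) c = 0 := by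
  simp only [cntB_sum, cY_sum, ← Finset.sum_add_distrib]
  have key : ∀ i, (i ∈ Y1 → i ∉ Y2 ∧ i ∉ Y3) ∧ (i ∈ Y2 → i ∉ Y3) := fun i =>
    ⟨fun h => ⟨Finset.disjoint_left.mp h12 h, Finset.disjoint_left.mp h13 h⟩,
      fun h => Finset.disjoint_left.mp h23 h⟩
  refine ⟨?_, ?_, ?_, ?_⟩
  on_goal 4 => refine Finset.sum_eq_zero fun i _ => ?_
  on_goal 1 => refine Finset.sum_congr rfl fun i _ => ?_
  on_goal 2 => refine Finset.sum_congr rfl fun i _ => ?_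
  on_goal 3 => refine Finset.sum_congr rfl fun i _ => ?_
  all_goals
    have := key i
    by_cases a1 : i ∈ Y1 <;> by_cases a2 : i ∈ Y2 <;> by_cases a3 : i ∈ Y3 <;>
      simp_all [base4]

theorem base_val {e : ℕ} (Y1 Y2 Y3 : Finset (Fin e))
    (h12 : Disjoint Y1 Y2) (h13 : Disjoint Y1 Y3) (h23 : Disjoint Y2 Y3) (i : Fin e)
    (s : Fin 4) :
    (i ∈ Y1 → base4 Y1 Y2 Y3 s i = decide (s.1 < 1)) ∧
    (i ∈ Y2 → base4 Y1 Y2 Y3 s i = decide (s.1 < 2)) ∧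
    (i ∈ Y3 → base4 Y1 Y2 Y3 s i = decide (s.1 < 3)) := by
  refine ⟨fun h => by simp [base4, h], fun h => ?_, fun h => ?_⟩
  · have := Finset.disjoint_right.mp h12 h
    simp [base4, h, this]
  · have a := Finset.disjoint_right.mp h13 h
    have b := Finset.disjoint_right.mp h23 h
    simp [base4, h, a, b]

theorem ind_fact {e : ℕ} (x : Fin e) (c : ℕ) :
    (ind x c = 1 ∧ x.1 < c) ∨ (ind x c = 0 ∧ c ≤ x.1) := by
  unfold ind
  split_ifs <;> omega

theorem emb_static {e y : ℕ} (Y : Finset (Fin e)) (h : Y.card = y) (hy : 0 < y) (f : Fin y) :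
    (f.1 = 0 ∧ (Y.orderEmbOfFin h f).1 = (Y.orderEmbOfFin h ⟨0, hy⟩).1) ∨
    (f.1 ≠ 0 ∧ (Y.orderEmbOfFin h ⟨0, hy⟩).1 < (Y.orderEmbOfFin h f).1) := by
  rcases Nat.eq_zero_or_pos f.1 with hf | hf
  · left
    refine ⟨hf, ?_⟩
    have : f = ⟨0, hy⟩ := Fin.ext hf
    rw [this]
  · right
    refine ⟨by omega, ?_⟩
    have : (⟨0, hy⟩ : Fin y) < f := hf
    exact (Y.orderEmbOfFin h).strictMono this

theorem cY_fact {e y : ℕ} (Y : Finset (Fin e)) (h : Y.card = y) (hy : 0 < y) (c : ℕ) :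
    (cY Y c = 0 ∧ c ≤ (Y.orderEmbOfFin h ⟨0, hy⟩).1) ∨
    (1 ≤ cY Y c ∧ (Y.orderEmbOfFin h ⟨0, hy⟩).1 < c) := by
  rcases Nat.lt_or_ge (Y.orderEmbOfFin h ⟨0, hy⟩).1 c with hc | hc
  · right
    refine ⟨Finset.card_pos.mpr ⟨Y.orderEmbOfFin h ⟨0, hy⟩, ?_⟩, hc⟩
    simp [hc]
  · left
    refine ⟨?_, hc⟩
    unfold cY
    rw [Finset.card_eq_zero, Finset.filter_eq_empty_iff]
    intro i hi
    have : i ∈ Set.range (Y.orderEmbOfFin h) := by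
      rw [Finset.range_orderEmbOfFin]; exact hi
    obtain ⟨f, rfl⟩ := this
    have := emb_static Y h hy f
    omega

theorem cY_fact2 {e y : ℕ} (Y : Finset (Fin e)) (h : Y.card = y) (hy : 0 < y) (f : Fin y)
    (c : ℕ) :
    (f.1 = 0 ∨ c ≤ (Y.orderEmbOfFin h f).1 ∨ 2 ≤ cY Y c) ∧
    (f.1 ≠ 0 ∨ (Y.orderEmbOfFin h f).1 + 1 < c ∨ cY Y c ≤ 1) := by
  constructor
  · by_contra hc
    push Not at hc
    obtain ⟨h1, h2, h3⟩ := hc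
    have hs := emb_static Y h hy f
    have hsub : ({Y.orderEmbOfFin h ⟨0, hy⟩, Y.orderEmbOfFin h f} : Finset (Fin e)) ⊆
        Y.filter (fun i => i.1 < c) := by
      intro i hi
      simp only [Finset.mem_insert, Finset.mem_singleton] at hi
      rcases hi with rfl | rfl <;>
        exact Finset.mem_filter.mpr ⟨Finset.orderEmbOfFin_mem _ _ _, by omega⟩
    have := Finset.card_le_card hsub
    rw [Finset.card_pair (by intro hh; rw [hh] at hs; omega)] at this
    unfold cY at h3
    omega
  · by_contra hc
    push Not at hc
    obtain ⟨h1, h2, h3⟩ := hc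
    have hf : f = ⟨0, hy⟩ := Fin.ext h1
    have : cY Y c ≤ 1 := by
      unfold cY
      rw [Finset.card_le_one]
      have aux : ∀ a ∈ Y.filter (fun i => i.1 < c), a = Y.orderEmbOfFin h ⟨0, hy⟩ := by
        intro a ha
        rw [Finset.mem_filter] at ha
        obtain ⟨ha, hac⟩ := ha
        have : a ∈ Set.range (Y.orderEmbOfFin h) := by
          rw [Finset.range_orderEmbOfFin]; exact ha
        obtain ⟨f', rfl⟩ := this
        have hs := emb_static Y h hy f'
        apply Fin.ext
        rw [hf] at h2
        omega
      intro a ha b hb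
      rw [aux a ha, aux b hb]
    omega

theorem ne_of_disj {e y y' : ℕ} {Y Y' : Finset (Fin e)} (hd : Disjoint Y Y') (h : Y.card = y)
    (h' : Y'.card = y') (f : Fin y) (f' : Fin y') :
    (Y.orderEmbOfFin h f).1 ≠ (Y'.orderEmbOfFin h' f').1 := fun hh =>
  Finset.disjoint_left.mp hd (Finset.orderEmbOfFin_mem Y h f)
    (by rw [Fin.ext hh]; exact Finset.orderEmbOfFin_mem Y' h' f')

theorem over_self {e : ℕ} (a : Fin e) (v : Fin 4 → Bool) (Mb : Fin 4 → Fin e → Bool)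
    (s : Fin 4) (b : Fin e) (h : b.1 ≠ a.1) : over1 a v Mb s b = Mb s b := by
  have : b ≠ a := fun hh => h (by rw [hh])
  simp [over1, this]

theorem cntG {e : ℕ} (c0 : Fin e) (v : Fin 4 → Bool) (Mb : Fin 4 → Fin e → Bool) (k : ℕ)
    (hb : ∀ s, Mb s c0 = decide (s.1 < k)) (s : Fin 4) (c : ℕ) :
    cntB (over1 c0 v Mb s) c + (if s.1 < k then ind c0 c else 0) =
      cntB (Mb s) c + (if v s = true then ind c0 c else 0) := by
  have := cntB_over c0 v Mb s c
  rw [hb s] at this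
  simpa using this


theorem rows_alpha1 {e : ℕ} (Y1 Y2 Y3 : Finset (Fin e)) {y1 : ℕ}
    (h12 : Disjoint Y1 Y2) (h13 : Disjoint Y1 Y3) (h23 : Disjoint Y2 Y3)
    (h1 : Y1.card = y1) (f : Fin y1) (c : ℕ) :
    cntB (alpha1 Y1 Y2 Y3 h1 f 0) c + ind (Y1.orderEmbOfFin h1 f) c =
      cY Y1 c + cY Y2 c + cY Y3 c ∧
    cntB (alpha1 Y1 Y2 Y3 h1 f 1) c =
      cY Y2 c + cY Y3 c ∧
    cntB (alpha1 Y1 Y2 Y3 h1 f 2) c =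
      cY Y3 c ∧
    cntB (alpha1 Y1 Y2 Y3 h1 f 3) c =
      0 + ind (Y1.orderEmbOfFin h1 f) c := by
  have B := cntB_base Y1 Y2 Y3 h12 h13 h23 c
  have R1 := fun s => cntG (Y1.orderEmbOfFin h1 f) ![false, false, false, true]
    (base4 Y1 Y2 Y3) 1
    (fun s => by rw [(base_val Y1 Y2 Y3 h12 h13 h23 _ s).1 (Finset.orderEmbOfFin_mem _ _ _)]) s c
  have a1 := R1 0
  have b1 := R1 1
  have c1 := R1 2
  have d1 := R1 3
  clear R1
  simp at a1 b1 c1 d1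
  unfold alpha1
  omega

theorem rows_alpha2 {e : ℕ} (Y1 Y2 Y3 : Finset (Fin e)) {y2 : ℕ}
    (h12 : Disjoint Y1 Y2) (h13 : Disjoint Y1 Y3) (h23 : Disjoint Y2 Y3)
    (h2 : Y2.card = y2) (g : Fin y2) (c : ℕ) :
    cntB (alpha2 Y1 Y2 Y3 h2 g 0) c + ind (Y2.orderEmbOfFin h2 g) c =
      cY Y1 c + cY Y2 c + cY Y3 c ∧
    cntB (alpha2 Y1 Y2 Y3 h2 g 1) c =
      cY Y2 c + cY Y3 c ∧
    cntB (alpha2 Y1 Y2 Y3 h2 g 2) c =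
      cY Y3 c ∧
    cntB (alpha2 Y1 Y2 Y3 h2 g 3) c =
      0 + ind (Y2.orderEmbOfFin h2 g) c := by
  have B := cntB_base Y1 Y2 Y3 h12 h13 h23 c
  have R2 := fun s => cntG (Y2.orderEmbOfFin h2 g) ![false, true, false, true]
    (base4 Y1 Y2 Y3) 2
    (fun s => by rw [(base_val Y1 Y2 Y3 h12 h13 h23 _ s).2.1 (Finset.orderEmbOfFin_mem _ _ _)]) s c
  have a2 := R2 0
  have b2 := R2 1
  have c2 := R2 2
  have d2 := R2 3
  clear R2
  simp at a2 b2 c2 d2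
  unfold alpha2
  omega

theorem rows_alpha3 {e : ℕ} (Y1 Y2 Y3 : Finset (Fin e)) {y3 : ℕ}
    (h12 : Disjoint Y1 Y2) (h13 : Disjoint Y1 Y3) (h23 : Disjoint Y2 Y3)
    (h3 : Y3.card = y3) (h : Fin y3) (c : ℕ) :
    cntB (alpha3 Y1 Y2 Y3 h3 h 0) c + ind (Y3.orderEmbOfFin h3 h) c =
      cY Y1 c + cY Y2 c + cY Y3 c ∧
    cntB (alpha3 Y1 Y2 Y3 h3 h 1) c =
      cY Y2 c + cY Y3 c ∧
    cntB (alpha3 Y1 Y2 Y3 h3 h 2) c =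
      cY Y3 c ∧
    cntB (alpha3 Y1 Y2 Y3 h3 h 3) c =
      0 + ind (Y3.orderEmbOfFin h3 h) c := by
  have B := cntB_base Y1 Y2 Y3 h12 h13 h23 c
  have R3 := fun s => cntG (Y3.orderEmbOfFin h3 h) ![false, true, true, true]
    (base4 Y1 Y2 Y3) 3
    (fun s => by rw [(base_val Y1 Y2 Y3 h12 h13 h23 _ s).2.2 (Finset.orderEmbOfFin_mem _ _ _)]) s c
  have a3 := R3 0
  have b3 := R3 1
  have c3 := R3 2
  have d3 := R3 3
  clear R3
  simp at a3 b3 c3 d3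
  unfold alpha3
  omega

theorem rows_beta12 {e : ℕ} (Y1 Y2 Y3 : Finset (Fin e)) {y1 y2 : ℕ}
    (h12 : Disjoint Y1 Y2) (h13 : Disjoint Y1 Y3) (h23 : Disjoint Y2 Y3)
    (h1 : Y1.card = y1) (h2 : Y2.card = y2) (f : Fin y1) (g : Fin y2) (c : ℕ) :
    cntB (beta12 Y1 Y2 Y3 h1 h2 f g 0) c + ind (Y1.orderEmbOfFin h1 f) c =
      cY Y1 c + cY Y2 c + cY Y3 c ∧
    cntB (beta12 Y1 Y2 Y3 h1 h2 f g 1) c + ind (Y2.orderEmbOfFin h2 g) c =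
      cY Y2 c + cY Y3 c + ind (Y1.orderEmbOfFin h1 f) c ∧
    cntB (beta12 Y1 Y2 Y3 h1 h2 f g 2) c =
      cY Y3 c ∧
    cntB (beta12 Y1 Y2 Y3 h1 h2 f g 3) c =
      0 + ind (Y2.orderEmbOfFin h2 g) c := by
  have B := cntB_base Y1 Y2 Y3 h12 h13 h23 c
  have R2 := fun s => cntG (Y2.orderEmbOfFin h2 g) ![true, false, false, true]
    (base4 Y1 Y2 Y3) 2
    (fun s => by rw [(base_val Y1 Y2 Y3 h12 h13 h23 _ s).2.1 (Finset.orderEmbOfFin_mem _ _ _)]) s c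
  have R1 := fun s => cntG (Y1.orderEmbOfFin h1 f) ![false, true, false, false]
    (over1 (Y2.orderEmbOfFin h2 g) ![true, false, false, true]
      (base4 Y1 Y2 Y3)) 1
    (fun s => by rw [over_self _ _ _ _ _ (ne_of_disj h12 h1 h2 f g), (base_val Y1 Y2 Y3 h12 h13 h23 _ s).1 (Finset.orderEmbOfFin_mem _ _ _)]) s c
  have a1 := R1 0
  have b1 := R1 1
  have c1 := R1 2
  have d1 := R1 3
  have a2 := R2 0
  have b2 := R2 1
  have c2 := R2 2
  have d2 := R2 3
  clear R1 R2
  simp at a1 b1 c1 d1 a2 b2 c2 d2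
  unfold beta12
  omega

theorem rows_beta13 {e : ℕ} (Y1 Y2 Y3 : Finset (Fin e)) {y1 y3 : ℕ}
    (h12 : Disjoint Y1 Y2) (h13 : Disjoint Y1 Y3) (h23 : Disjoint Y2 Y3)
    (h1 : Y1.card = y1) (h3 : Y3.card = y3) (f : Fin y1) (h : Fin y3) (c : ℕ) :
    cntB (beta13 Y1 Y2 Y3 h1 h3 f h 0) c + ind (Y1.orderEmbOfFin h1 f) c =
      cY Y1 c + cY Y2 c + cY Y3 c ∧
    cntB (beta13 Y1 Y2 Y3 h1 h3 f h 1) c =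
      cY Y2 c + cY Y3 c ∧
    cntB (beta13 Y1 Y2 Y3 h1 h3 f h 2) c + ind (Y3.orderEmbOfFin h3 h) c =
      cY Y3 c + ind (Y1.orderEmbOfFin h1 f) c ∧
    cntB (beta13 Y1 Y2 Y3 h1 h3 f h 3) c =
      0 + ind (Y3.orderEmbOfFin h3 h) c := by
  have B := cntB_base Y1 Y2 Y3 h12 h13 h23 c
  have R3 := fun s => cntG (Y3.orderEmbOfFin h3 h) ![true, true, false, true]
    (base4 Y1 Y2 Y3) 3
    (fun s => by rw [(base_val Y1 Y2 Y3 h12 h13 h23 _ s).2.2 (Finset.orderEmbOfFin_mem _ _ _)]) s c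
  have R1 := fun s => cntG (Y1.orderEmbOfFin h1 f) ![false, false, true, false]
    (over1 (Y3.orderEmbOfFin h3 h) ![true, true, false, true]
      (base4 Y1 Y2 Y3)) 1
    (fun s => by rw [over_self _ _ _ _ _ (ne_of_disj h13 h1 h3 f h), (base_val Y1 Y2 Y3 h12 h13 h23 _ s).1 (Finset.orderEmbOfFin_mem _ _ _)]) s c
  have a1 := R1 0
  have b1 := R1 1
  have c1 := R1 2
  have d1 := R1 3
  have a3 := R3 0
  have b3 := R3 1
  have c3 := R3 2
  have d3 := R3 3
  clear R1 R3
  simp at a1 b1 c1 d1 a3 b3 c3 d3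
  unfold beta13
  omega

theorem rows_beta13bar {e : ℕ} (Y1 Y2 Y3 : Finset (Fin e)) {y1 y3 : ℕ}
    (h12 : Disjoint Y1 Y2) (h13 : Disjoint Y1 Y3) (h23 : Disjoint Y2 Y3)
    (h1 : Y1.card = y1) (h3 : Y3.card = y3) (f : Fin y1) (h : Fin y3) (c : ℕ) :
    cntB (beta13bar Y1 Y2 Y3 h1 h3 f h 0) c + ind (Y1.orderEmbOfFin h1 f) c =
      cY Y1 c + cY Y2 c + cY Y3 c ∧
    cntB (beta13bar Y1 Y2 Y3 h1 h3 f h 1) c + ind (Y3.orderEmbOfFin h3 h) c =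
      cY Y2 c + cY Y3 c + ind (Y1.orderEmbOfFin h1 f) c ∧
    cntB (beta13bar Y1 Y2 Y3 h1 h3 f h 2) c =
      cY Y3 c ∧
    cntB (beta13bar Y1 Y2 Y3 h1 h3 f h 3) c =
      0 + ind (Y3.orderEmbOfFin h3 h) c := by
  have B := cntB_base Y1 Y2 Y3 h12 h13 h23 c
  have R3 := fun s => cntG (Y3.orderEmbOfFin h3 h) ![true, false, true, true]
    (base4 Y1 Y2 Y3) 3
    (fun s => by rw [(base_val Y1 Y2 Y3 h12 h13 h23 _ s).2.2 (Finset.orderEmbOfFin_mem _ _ _)]) s c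
  have R1 := fun s => cntG (Y1.orderEmbOfFin h1 f) ![false, true, false, false]
    (over1 (Y3.orderEmbOfFin h3 h) ![true, false, true, true]
      (base4 Y1 Y2 Y3)) 1
    (fun s => by rw [over_self _ _ _ _ _ (ne_of_disj h13 h1 h3 f h), (base_val Y1 Y2 Y3 h12 h13 h23 _ s).1 (Finset.orderEmbOfFin_mem _ _ _)]) s c
  have a1 := R1 0
  have b1 := R1 1
  have c1 := R1 2
  have d1 := R1 3
  have a3 := R3 0
  have b3 := R3 1
  have c3 := R3 2
  have d3 := R3 3
  clear R1 R3
  simp at a1 b1 c1 d1 a3 b3 c3 d3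
  unfold beta13bar
  omega

theorem rows_beta23 {e : ℕ} (Y1 Y2 Y3 : Finset (Fin e)) {y2 y3 : ℕ}
    (h12 : Disjoint Y1 Y2) (h13 : Disjoint Y1 Y3) (h23 : Disjoint Y2 Y3)
    (h2 : Y2.card = y2) (h3 : Y3.card = y3) (g : Fin y2) (h : Fin y3) (c : ℕ) :
    cntB (beta23 Y1 Y2 Y3 h2 h3 g h 0) c + ind (Y2.orderEmbOfFin h2 g) c =
      cY Y1 c + cY Y2 c + cY Y3 c ∧
    cntB (beta23 Y1 Y2 Y3 h2 h3 g h 1) c =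
      cY Y2 c + cY Y3 c ∧
    cntB (beta23 Y1 Y2 Y3 h2 h3 g h 2) c + ind (Y3.orderEmbOfFin h3 h) c =
      cY Y3 c + ind (Y2.orderEmbOfFin h2 g) c ∧
    cntB (beta23 Y1 Y2 Y3 h2 h3 g h 3) c =
      0 + ind (Y3.orderEmbOfFin h3 h) c := by
  have B := cntB_base Y1 Y2 Y3 h12 h13 h23 c
  have R3 := fun s => cntG (Y3.orderEmbOfFin h3 h) ![true, true, false, true]
    (base4 Y1 Y2 Y3) 3
    (fun s => by rw [(base_val Y1 Y2 Y3 h12 h13 h23 _ s).2.2 (Finset.orderEmbOfFin_mem _ _ _)]) s c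
  have R2 := fun s => cntG (Y2.orderEmbOfFin h2 g) ![false, true, true, false]
    (over1 (Y3.orderEmbOfFin h3 h) ![true, true, false, true]
      (base4 Y1 Y2 Y3)) 2
    (fun s => by rw [over_self _ _ _ _ _ (ne_of_disj h23 h2 h3 g h), (base_val Y1 Y2 Y3 h12 h13 h23 _ s).2.1 (Finset.orderEmbOfFin_mem _ _ _)]) s c
  have a2 := R2 0
  have b2 := R2 1
  have c2 := R2 2
  have d2 := R2 3
  have a3 := R3 0
  have b3 := R3 1
  have c3 := R3 2
  have d3 := R3 3
  clear R2 R3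
  simp at a2 b2 c2 d2 a3 b3 c3 d3
  unfold beta23
  omega

theorem rows_gamma123 {e : ℕ} (Y1 Y2 Y3 : Finset (Fin e)) {y1 y2 y3 : ℕ}
    (h12 : Disjoint Y1 Y2) (h13 : Disjoint Y1 Y3) (h23 : Disjoint Y2 Y3)
    (h1 : Y1.card = y1) (h2 : Y2.card = y2) (h3 : Y3.card = y3) (f : Fin y1) (g : Fin y2) (h : Fin y3) (c : ℕ) :
    cntB (gamma123 Y1 Y2 Y3 h1 h2 h3 f g h 0) c + ind (Y1.orderEmbOfFin h1 f) c =
      cY Y1 c + cY Y2 c + cY Y3 c ∧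
    cntB (gamma123 Y1 Y2 Y3 h1 h2 h3 f g h 1) c + ind (Y2.orderEmbOfFin h2 g) c =
      cY Y2 c + cY Y3 c + ind (Y1.orderEmbOfFin h1 f) c ∧
    cntB (gamma123 Y1 Y2 Y3 h1 h2 h3 f g h 2) c + ind (Y3.orderEmbOfFin h3 h) c =
      cY Y3 c + ind (Y2.orderEmbOfFin h2 g) c ∧
    cntB (gamma123 Y1 Y2 Y3 h1 h2 h3 f g h 3) c =
      0 + ind (Y3.orderEmbOfFin h3 h) c := by
  have B := cntB_base Y1 Y2 Y3 h12 h13 h23 c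
  have R3 := fun s => cntG (Y3.orderEmbOfFin h3 h) ![true, true, false, true]
    (base4 Y1 Y2 Y3) 3
    (fun s => by rw [(base_val Y1 Y2 Y3 h12 h13 h23 _ s).2.2 (Finset.orderEmbOfFin_mem _ _ _)]) s c
  have R2 := fun s => cntG (Y2.orderEmbOfFin h2 g) ![true, false, true, false]
    (over1 (Y3.orderEmbOfFin h3 h) ![true, true, false, true]
      (base4 Y1 Y2 Y3)) 2
    (fun s => by rw [over_self _ _ _ _ _ (ne_of_disj h23 h2 h3 g h), (base_val Y1 Y2 Y3 h12 h13 h23 _ s).2.1 (Finset.orderEmbOfFin_mem _ _ _)]) s c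
  have R1 := fun s => cntG (Y1.orderEmbOfFin h1 f) ![false, true, false, false]
    (over1 (Y2.orderEmbOfFin h2 g) ![true, false, true, false]
      (over1 (Y3.orderEmbOfFin h3 h) ![true, true, false, true]
      (base4 Y1 Y2 Y3))) 1
    (fun s => by rw [over_self _ _ _ _ _ (ne_of_disj h12 h1 h2 f g), over_self _ _ _ _ _ (ne_of_disj h13 h1 h3 f h), (base_val Y1 Y2 Y3 h12 h13 h23 _ s).1 (Finset.orderEmbOfFin_mem _ _ _)]) s c
  have a1 := R1 0
  have b1 := R1 1
  have c1 := R1 2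
  have d1 := R1 3
  have a2 := R2 0
  have b2 := R2 1
  have c2 := R2 2
  have d2 := R2 3
  have a3 := R3 0
  have b3 := R3 1
  have c3 := R3 2
  have d3 := R3 3
  clear R1 R2 R3
  simp at a1 b1 c1 d1 a2 b2 c2 d2 a3 b3 c3 d3
  unfold gamma123
  omega


/-! The elementary conditions -/

theorem ind_top {e : ℕ} (x : Fin e) : ind x e = 1 := by
  have := ind_fact x e
  have := x.2
  omega

theorem cY_top {e y : ℕ} (Y : Finset (Fin e)) (h : Y.card = y) (hy : 0 < y) : 1 ≤ cY Y e := by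
  have := cY_fact Y h hy e
  have := (Y.orderEmbOfFin h ⟨0, hy⟩).2
  omega

theorem ind_le_cY {e y : ℕ} (Y : Finset (Fin e)) (h : Y.card = y) (hy : 0 < y) (f : Fin y)
    (c : ℕ) : ind (Y.orderEmbOfFin h f) c ≤ cY Y c := by
  have h1 := cY_fact Y h hy c
  have h2 := ind_fact (Y.orderEmbOfFin h f) c
  have h3 := emb_static Y h hy f
  omega

theorem condX {e y : ℕ} (Y : Finset (Fin e)) (h : Y.card = y) (hy : 0 < y) (x : Fin e)
    (hx : (Y.orderEmbOfFin h ⟨0, hy⟩).1 ≠ x.1) :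
    (∀ c, ind x c ≤ cY Y c) ↔ (Y.orderEmbOfFin h ⟨0, hy⟩).1 < x.1 := by
  constructor
  · intro H
    have h0 := H (x.1 + 1)
    have h1 := cY_fact Y h hy (x.1 + 1)
    have h2 := ind_fact x (x.1 + 1)
    omega
  · intro H c
    have h1 := cY_fact Y h hy c
    have h2 := ind_fact x c
    omega

theorem condW {e y : ℕ} (Y : Finset (Fin e)) (h : Y.card = y) (hy : 0 < y) (x z : Fin e)
    (hx : (Y.orderEmbOfFin h ⟨0, hy⟩).1 ≠ x.1) :
    (∀ c, ind x c ≤ cY Y c + ind z c) ↔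
      (x.1 < z.1 → (Y.orderEmbOfFin h ⟨0, hy⟩).1 < x.1) := by
  constructor
  · intro H hlt
    have h0 := H (x.1 + 1)
    have h1 := cY_fact Y h hy (x.1 + 1)
    have h2 := ind_fact x (x.1 + 1)
    have h3 := ind_fact z (x.1 + 1)
    omega
  · intro H c
    have h1 := cY_fact Y h hy c
    have h2 := ind_fact x c
    have h3 := ind_fact z c
    omega

theorem condZ {e y : ℕ} (Y : Finset (Fin e)) (h : Y.card = y) (hy : 0 < y) (f : Fin y)
    (z w : Fin e) :
    (∀ c, 2 * ind (Y.orderEmbOfFin h f) c ≤ cY Y c + ind z c + ind w c) ↔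
      ((Y.orderEmbOfFin h f).1 < z.1 → (Y.orderEmbOfFin h f).1 < w.1 → f.1 ≠ 0) := by
  constructor
  · intro H hlt hlt2
    have h0 := H ((Y.orderEmbOfFin h f).1 + 1)
    have h1 := cY_fact2 Y h hy f ((Y.orderEmbOfFin h f).1 + 1)
    have h2 := ind_fact (Y.orderEmbOfFin h f) ((Y.orderEmbOfFin h f).1 + 1)
    have h3 := ind_fact z ((Y.orderEmbOfFin h f).1 + 1)
    have h4 := ind_fact w ((Y.orderEmbOfFin h f).1 + 1)
    omega
  · intro H c
    have h0 := ind_le_cY Y h hy f c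
    have h1 := cY_fact2 Y h hy f c
    have h2 := ind_fact (Y.orderEmbOfFin h f) c
    have h3 := ind_fact z c
    have h4 := ind_fact w c
    omega

theorem condZ1 {e y : ℕ} (Y : Finset (Fin e)) (h : Y.card = y) (hy : 0 < y) (f : Fin y)
    (z : Fin e) :
    (∀ c, 2 * ind (Y.orderEmbOfFin h f) c ≤ cY Y c + ind z c) ↔
      ((Y.orderEmbOfFin h f).1 < z.1 → f.1 ≠ 0) := by
  constructor
  · intro H hlt
    exact (condZ Y h hy f z z).mp (fun c => (H c).trans (Nat.le_add_right _ _)) hlt hlt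
  · intro H c
    have h0 := ind_le_cY Y h hy f c
    have h1 := cY_fact2 Y h hy f c
    have h2 := ind_fact (Y.orderEmbOfFin h f) c
    have h3 := ind_fact z c
    omega


/-- Classification of the Kleshchev multipartitions in the
`r = 4` family. -/
theorem r4_kleshchev_classification (e : ℕ) (he : 2 ≤ e)
    (Y1 Y2 Y3 : Finset (Fin e)) {y1 y2 y3 : ℕ}
    (h1 : Y1.card = y1) (h2 : Y2.card = y2) (h3 : Y3.card = y3)
    (hy1 : 0 < y1) (hy2 : 0 < y2) (hy3 : 0 < y3)
    (h12 : Disjoint Y1 Y2) (h13 : Disjoint Y1 Y3) (h23 : Disjoint Y2 Y3) :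
    (∀ f : Fin y1,
      IsKleshchev (PtCharge (fun _ => 0) (alpha1 Y1 Y2 Y3 h1 f))
          (PtPart (fun _ => 0) (alpha1 Y1 Y2 Y3 h1 f)) ↔
        Y3.orderEmbOfFin h3 ⟨0, hy3⟩ < Y1.orderEmbOfFin h1 f) ∧
    (∀ g : Fin y2,
      IsKleshchev (PtCharge (fun _ => 0) (alpha2 Y1 Y2 Y3 h2 g))
          (PtPart (fun _ => 0) (alpha2 Y1 Y2 Y3 h2 g)) ↔
        Y1.orderEmbOfFin h1 ⟨0, hy1⟩ < Y2.orderEmbOfFin h2 g ∧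
        Y3.orderEmbOfFin h3 ⟨0, hy3⟩ < Y2.orderEmbOfFin h2 g) ∧
    (∀ h : Fin y3,
      IsKleshchev (PtCharge (fun _ => 0) (alpha3 Y1 Y2 Y3 h3 h))
          (PtPart (fun _ => 0) (alpha3 Y1 Y2 Y3 h3 h)) ↔
        Y1.orderEmbOfFin h1 ⟨0, hy1⟩ < Y3.orderEmbOfFin h3 h) ∧
    (∀ (f : Fin y1) (g : Fin y2),
      IsKleshchev (PtCharge (fun _ => 0) (beta12 Y1 Y2 Y3 h1 h2 f g))
          (PtPart (fun _ => 0) (beta12 Y1 Y2 Y3 h1 h2 f g)) ↔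
        (Y3.orderEmbOfFin h3 ⟨0, hy3⟩ < Y2.orderEmbOfFin h2 g ∧
          Y2.orderEmbOfFin h2 g < Y1.orderEmbOfFin h1 f) ∨
        (Y3.orderEmbOfFin h3 ⟨0, hy3⟩ < Y2.orderEmbOfFin h2 g ∧
          Y1.orderEmbOfFin h1 f < Y2.orderEmbOfFin h2 g ∧ f ≠ ⟨0, hy1⟩)) ∧
    (∀ (f : Fin y1) (h : Fin y3),
      IsKleshchev (PtCharge (fun _ => 0) (beta13 Y1 Y2 Y3 h1 h3 f h))
          (PtPart (fun _ => 0) (beta13 Y1 Y2 Y3 h1 h3 f h)) ↔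
        (Y2.orderEmbOfFin h2 ⟨0, hy2⟩ < Y1.orderEmbOfFin h1 f ∧
          Y1.orderEmbOfFin h1 f < Y3.orderEmbOfFin h3 h) ∨
        (Y3.orderEmbOfFin h3 h < Y1.orderEmbOfFin h1 f ∧ h ≠ ⟨0, hy3⟩)) ∧
    (∀ (f : Fin y1) (h : Fin y3),
      IsKleshchev (PtCharge (fun _ => 0) (beta13bar Y1 Y2 Y3 h1 h3 f h))
          (PtPart (fun _ => 0) (beta13bar Y1 Y2 Y3 h1 h3 f h)) ↔
        (Y2.orderEmbOfFin h2 ⟨0, hy2⟩ < Y3.orderEmbOfFin h3 h ∧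
          Y3.orderEmbOfFin h3 h < Y1.orderEmbOfFin h1 f) ∨
        (Y1.orderEmbOfFin h1 f < Y3.orderEmbOfFin h3 h ∧ f ≠ ⟨0, hy1⟩)) ∧
    (∀ (g : Fin y2) (h : Fin y3),
      IsKleshchev (PtCharge (fun _ => 0) (beta23 Y1 Y2 Y3 h2 h3 g h))
          (PtPart (fun _ => 0) (beta23 Y1 Y2 Y3 h2 h3 g h)) ↔
        (Y1.orderEmbOfFin h1 ⟨0, hy1⟩ < Y2.orderEmbOfFin h2 g ∧
          Y2.orderEmbOfFin h2 g < Y3.orderEmbOfFin h3 h) ∨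
        (Y1.orderEmbOfFin h1 ⟨0, hy1⟩ < Y2.orderEmbOfFin h2 g ∧
          Y3.orderEmbOfFin h3 h < Y2.orderEmbOfFin h2 g ∧ h ≠ ⟨0, hy3⟩)) ∧
    (∀ (f : Fin y1) (g : Fin y2) (h : Fin y3),
      IsKleshchev (PtCharge (fun _ => 0) (gamma123 Y1 Y2 Y3 h1 h2 h3 f g h))
          (PtPart (fun _ => 0) (gamma123 Y1 Y2 Y3 h1 h2 h3 f g h)) ↔
        (Y2.orderEmbOfFin h2 g < Y1.orderEmbOfFin h1 f ∧
          Y2.orderEmbOfFin h2 g < Y3.orderEmbOfFin h3 h ∧ g ≠ ⟨0, hy2⟩) ∨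
        (Y1.orderEmbOfFin h1 f < Y2.orderEmbOfFin h2 g ∧
          Y2.orderEmbOfFin h2 g < Y3.orderEmbOfFin h3 h ∧ f ≠ ⟨0, hy1⟩) ∨
        (Y3.orderEmbOfFin h3 h < Y2.orderEmbOfFin h2 g ∧
          Y2.orderEmbOfFin h2 g < Y1.orderEmbOfFin h1 f ∧ h ≠ ⟨0, hy3⟩) ∨
        (Y1.orderEmbOfFin h1 f < Y2.orderEmbOfFin h2 g ∧
          Y3.orderEmbOfFin h3 h < Y2.orderEmbOfFin h2 g ∧
          f ≠ ⟨0, hy1⟩ ∧ h ≠ ⟨0, hy3⟩)) := by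
  have N12 := ne_of_disj h12 h1 h2
  have N13 := ne_of_disj h13 h1 h3
  have N23 := ne_of_disj h23 h2 h3
  have N21 := ne_of_disj h12.symm h2 h1
  have N31 := ne_of_disj h13.symm h3 h1
  have N32 := ne_of_disj h23.symm h3 h2
  have t1 := cY_top Y1 h1 hy1
  have t2 := cY_top Y2 h2 hy2
  have t3 := cY_top Y3 h3 hy3
  refine ⟨fun f => ?_, fun g => ?_, fun h => ?_, fun f g => ?_, fun f h => ?_, fun f h => ?_,
    fun g h => ?_, fun f g h => ?_⟩
  · have R := rows_alpha1 Y1 Y2 Y3 h12 h13 h23 h1 f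
    rw [Pt_iff4 _ (by
      have R := R e
      simp only [ind_top] at R
      omega)]
    have E : ∀ c, (cntB (alpha1 Y1 Y2 Y3 h1 f 1) c ≤ cntB (alpha1 Y1 Y2 Y3 h1 f 0) c ∧
        cntB (alpha1 Y1 Y2 Y3 h1 f 2) c ≤ cntB (alpha1 Y1 Y2 Y3 h1 f 1) c ∧
        cntB (alpha1 Y1 Y2 Y3 h1 f 3) c ≤ cntB (alpha1 Y1 Y2 Y3 h1 f 2) c) ↔
        (ind (Y1.orderEmbOfFin h1 f) c ≤ cY Y3 c) := by
      intro c
      have R := R c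
      have I1 := ind_le_cY Y1 h1 hy1 f c
      omega
    simp only [E, forall_and]
    rw [condX Y3 h3 hy3 (Y1.orderEmbOfFin h1 f) (N31 _ _)]
    clear E R
    simp only [Fin.lt_def]
  · have R := rows_alpha2 Y1 Y2 Y3 h12 h13 h23 h2 g
    rw [Pt_iff4 _ (by
      have R := R e
      simp only [ind_top] at R
      omega)]
    have E : ∀ c, (cntB (alpha2 Y1 Y2 Y3 h2 g 1) c ≤ cntB (alpha2 Y1 Y2 Y3 h2 g 0) c ∧
        cntB (alpha2 Y1 Y2 Y3 h2 g 2) c ≤ cntB (alpha2 Y1 Y2 Y3 h2 g 1) c ∧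
        cntB (alpha2 Y1 Y2 Y3 h2 g 3) c ≤ cntB (alpha2 Y1 Y2 Y3 h2 g 2) c) ↔
        (ind (Y2.orderEmbOfFin h2 g) c ≤ cY Y1 c ∧
        ind (Y2.orderEmbOfFin h2 g) c ≤ cY Y3 c) := by
      intro c
      have R := R c
      have I2 := ind_le_cY Y2 h2 hy2 g c
      omega
    simp only [E, forall_and]
    rw [condX Y1 h1 hy1 (Y2.orderEmbOfFin h2 g) (N12 _ _), condX Y3 h3 hy3 (Y2.orderEmbOfFin h2 g) (N32 _ _)]
    clear E R
    simp only [Fin.lt_def]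
  · have R := rows_alpha3 Y1 Y2 Y3 h12 h13 h23 h3 h
    rw [Pt_iff4 _ (by
      have R := R e
      simp only [ind_top] at R
      omega)]
    have E : ∀ c, (cntB (alpha3 Y1 Y2 Y3 h3 h 1) c ≤ cntB (alpha3 Y1 Y2 Y3 h3 h 0) c ∧
        cntB (alpha3 Y1 Y2 Y3 h3 h 2) c ≤ cntB (alpha3 Y1 Y2 Y3 h3 h 1) c ∧
        cntB (alpha3 Y1 Y2 Y3 h3 h 3) c ≤ cntB (alpha3 Y1 Y2 Y3 h3 h 2) c) ↔
        (ind (Y3.orderEmbOfFin h3 h) c ≤ cY Y1 c) := by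
      intro c
      have R := R c
      have I3 := ind_le_cY Y3 h3 hy3 h c
      omega
    simp only [E, forall_and]
    rw [condX Y1 h1 hy1 (Y3.orderEmbOfFin h3 h) (N13 _ _)]
    clear E R
    simp only [Fin.lt_def]
  · have R := rows_beta12 Y1 Y2 Y3 h12 h13 h23 h1 h2 f g
    rw [Pt_iff4 _ (by
      have R := R e
      simp only [ind_top] at R
      omega)]
    have E : ∀ c, (cntB (beta12 Y1 Y2 Y3 h1 h2 f g 1) c ≤ cntB (beta12 Y1 Y2 Y3 h1 h2 f g 0) c ∧
        cntB (beta12 Y1 Y2 Y3 h1 h2 f g 2) c ≤ cntB (beta12 Y1 Y2 Y3 h1 h2 f g 1) c ∧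
        cntB (beta12 Y1 Y2 Y3 h1 h2 f g 3) c ≤ cntB (beta12 Y1 Y2 Y3 h1 h2 f g 2) c) ↔
        (2 * ind (Y1.orderEmbOfFin h1 f) c ≤ cY Y1 c + ind (Y2.orderEmbOfFin h2 g) c ∧
        ind (Y2.orderEmbOfFin h2 g) c ≤ cY Y3 c) := by
      intro c
      have R := R c
      have I1 := ind_le_cY Y1 h1 hy1 f c
      have I2 := ind_le_cY Y2 h2 hy2 g c
      omega
    simp only [E, forall_and]
    rw [condZ1 Y1 h1 hy1 f (Y2.orderEmbOfFin h2 g), condX Y3 h3 hy3 (Y2.orderEmbOfFin h2 g) (N32 _ _)]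
    have D12 := N12 f g
    clear E R
    simp only [Fin.lt_def, ne_eq, Fin.ext_iff]
    omega
  · have R := rows_beta13 Y1 Y2 Y3 h12 h13 h23 h1 h3 f h
    rw [Pt_iff4 _ (by
      have R := R e
      simp only [ind_top] at R
      omega)]
    have E : ∀ c, (cntB (beta13 Y1 Y2 Y3 h1 h3 f h 1) c ≤ cntB (beta13 Y1 Y2 Y3 h1 h3 f h 0) c ∧
        cntB (beta13 Y1 Y2 Y3 h1 h3 f h 2) c ≤ cntB (beta13 Y1 Y2 Y3 h1 h3 f h 1) c ∧
        cntB (beta13 Y1 Y2 Y3 h1 h3 f h 3) c ≤ cntB (beta13 Y1 Y2 Y3 h1 h3 f h 2) c) ↔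
        (ind (Y1.orderEmbOfFin h1 f) c ≤ cY Y2 c + ind (Y3.orderEmbOfFin h3 h) c ∧
        2 * ind (Y3.orderEmbOfFin h3 h) c ≤ cY Y3 c + ind (Y1.orderEmbOfFin h1 f) c) := by
      intro c
      have R := R c
      have I1 := ind_le_cY Y1 h1 hy1 f c
      have I3 := ind_le_cY Y3 h3 hy3 h c
      omega
    simp only [E, forall_and]
    rw [condW Y2 h2 hy2 (Y1.orderEmbOfFin h1 f) (Y3.orderEmbOfFin h3 h) (N21 _ _), condZ1 Y3 h3 hy3 h (Y1.orderEmbOfFin h1 f)]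
    have D13 := N13 f h
    clear E R
    simp only [Fin.lt_def, ne_eq, Fin.ext_iff]
    omega
  · have R := rows_beta13bar Y1 Y2 Y3 h12 h13 h23 h1 h3 f h
    rw [Pt_iff4 _ (by
      have R := R e
      simp only [ind_top] at R
      omega)]
    have E : ∀ c, (cntB (beta13bar Y1 Y2 Y3 h1 h3 f h 1) c ≤ cntB (beta13bar Y1 Y2 Y3 h1 h3 f h 0) c ∧
        cntB (beta13bar Y1 Y2 Y3 h1 h3 f h 2) c ≤ cntB (beta13bar Y1 Y2 Y3 h1 h3 f h 1) c ∧
        cntB (beta13bar Y1 Y2 Y3 h1 h3 f h 3) c ≤ cntB (beta13bar Y1 Y2 Y3 h1 h3 f h 2) c) ↔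
        (2 * ind (Y1.orderEmbOfFin h1 f) c ≤ cY Y1 c + ind (Y3.orderEmbOfFin h3 h) c ∧
        ind (Y3.orderEmbOfFin h3 h) c ≤ cY Y2 c + ind (Y1.orderEmbOfFin h1 f) c) := by
      intro c
      have R := R c
      have I1 := ind_le_cY Y1 h1 hy1 f c
      have I3 := ind_le_cY Y3 h3 hy3 h c
      omega
    simp only [E, forall_and]
    rw [condZ1 Y1 h1 hy1 f (Y3.orderEmbOfFin h3 h), condW Y2 h2 hy2 (Y3.orderEmbOfFin h3 h) (Y1.orderEmbOfFin h1 f) (N23 _ _)]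
    have D13 := N13 f h
    clear E R
    simp only [Fin.lt_def, ne_eq, Fin.ext_iff]
    omega
  · have R := rows_beta23 Y1 Y2 Y3 h12 h13 h23 h2 h3 g h
    rw [Pt_iff4 _ (by
      have R := R e
      simp only [ind_top] at R
      omega)]
    have E : ∀ c, (cntB (beta23 Y1 Y2 Y3 h2 h3 g h 1) c ≤ cntB (beta23 Y1 Y2 Y3 h2 h3 g h 0) c ∧
        cntB (beta23 Y1 Y2 Y3 h2 h3 g h 2) c ≤ cntB (beta23 Y1 Y2 Y3 h2 h3 g h 1) c ∧
        cntB (beta23 Y1 Y2 Y3 h2 h3 g h 3) c ≤ cntB (beta23 Y1 Y2 Y3 h2 h3 g h 2) c) ↔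
        (ind (Y2.orderEmbOfFin h2 g) c ≤ cY Y1 c ∧
        2 * ind (Y3.orderEmbOfFin h3 h) c ≤ cY Y3 c + ind (Y2.orderEmbOfFin h2 g) c) := by
      intro c
      have R := R c
      have I2 := ind_le_cY Y2 h2 hy2 g c
      have I3 := ind_le_cY Y3 h3 hy3 h c
      omega
    simp only [E, forall_and]
    rw [condX Y1 h1 hy1 (Y2.orderEmbOfFin h2 g) (N12 _ _), condZ1 Y3 h3 hy3 h (Y2.orderEmbOfFin h2 g)]
    have D23 := N23 g h
    clear E R
    simp only [Fin.lt_def, ne_eq, Fin.ext_iff]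
    omega
  · have R := rows_gamma123 Y1 Y2 Y3 h12 h13 h23 h1 h2 h3 f g h
    rw [Pt_iff4 _ (by
      have R := R e
      simp only [ind_top] at R
      omega)]
    have E : ∀ c, (cntB (gamma123 Y1 Y2 Y3 h1 h2 h3 f g h 1) c ≤ cntB (gamma123 Y1 Y2 Y3 h1 h2 h3 f g h 0) c ∧
        cntB (gamma123 Y1 Y2 Y3 h1 h2 h3 f g h 2) c ≤ cntB (gamma123 Y1 Y2 Y3 h1 h2 h3 f g h 1) c ∧
        cntB (gamma123 Y1 Y2 Y3 h1 h2 h3 f g h 3) c ≤ cntB (gamma123 Y1 Y2 Y3 h1 h2 h3 f g h 2) c) ↔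
        (2 * ind (Y1.orderEmbOfFin h1 f) c ≤ cY Y1 c + ind (Y2.orderEmbOfFin h2 g) c ∧
        2 * ind (Y2.orderEmbOfFin h2 g) c ≤ cY Y2 c + ind (Y1.orderEmbOfFin h1 f) c + ind (Y3.orderEmbOfFin h3 h) c ∧
        2 * ind (Y3.orderEmbOfFin h3 h) c ≤ cY Y3 c + ind (Y2.orderEmbOfFin h2 g) c) := by
      intro c
      have R := R c
      have I1 := ind_le_cY Y1 h1 hy1 f c
      have I2 := ind_le_cY Y2 h2 hy2 g c
      have I3 := ind_le_cY Y3 h3 hy3 h c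
      omega
    simp only [E, forall_and]
    rw [condZ1 Y1 h1 hy1 f (Y2.orderEmbOfFin h2 g), condZ Y2 h2 hy2 g (Y1.orderEmbOfFin h1 f) (Y3.orderEmbOfFin h3 h), condZ1 Y3 h3 hy3 h (Y2.orderEmbOfFin h2 g)]
    have D12 := N12 f g
    have D13 := N13 f h
    have D23 := N23 g h
    clear E R
    simp only [Fin.lt_def, ne_eq, Fin.ext_iff]
    omega


end
end AK
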